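/- arXiv:2103.04304 — 2 statements merged into one kernel-verified Lean document; each statement's English description precedes it below -/
import Mathlib

section
/- If the pair (A, p) is a competitive equilibrium for n agents with monotone, normalized, nonnegative valuations v_1,…,v_n over a finite set M of indivisible goods, where each agent's budget equals her entitlement b_i > 0 and Σ_i b_i = 1, then every agent receives at least her AnyPrice share: v_i(A_i) ≥ APS(b_i, v_i, M) for every agent i. -/
open Finset

def IsPartition {ι : Type*} [DecidableEq ι] (M : Finset ι) {n : ℕ} (A : Fin n → Finset ι) : Prop :=
  (∀ i, A i ⊆ M) ∧ (∀ i j, i ≠ j → Disjoint (A i) (A j)) ∧ ∀ x ∈ M, ∃ i, x ∈ A i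

/-- The AnyPrice share (price-based definition): the minimum over all nonnegative
price vectors summing to 1 of the best value of an affordable bundle. -/
noncomputable def APS {ι : Type*} (b : ℝ) (v : Finset ι → ℝ) (M : Finset ι) : ℝ :=
  sInf {t : ℝ | ∃ p : ι → ℝ, (∀ j ∈ M, 0 ≤ p j) ∧ (∑ j ∈ M, p j) = 1 ∧
    t = sSup {u : ℝ | ∃ S, S ⊆ M ∧ (∑ j ∈ S, p j) ≤ b ∧ u = v S}}

/-- Competitive equilibrium: an allocation together with item prices such that every
agent's bundle is within her budget and is value-maximizing among affordable bundles. -/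
def IsCE {ι : Type*} [DecidableEq ι] {n : ℕ} (v : Fin n → Finset ι → ℝ) (b : Fin n → ℝ)
    (M : Finset ι) (A : Fin n → Finset ι) (p : ι → ℝ) : Prop :=
  IsPartition M A ∧ (∀ j ∈ M, 0 ≤ p j) ∧
  (∀ i, ∑ j ∈ A i, p j ≤ b i) ∧
  ∀ i, ∀ S ⊆ M, (∑ j ∈ S, p j) ≤ b i → v i S ≤ v i (A i)

/-!
The bundles partition the goods, so equilibrium prices total at most the sum of the budgets, hence
at most `1`. Adding the missing mass to the price of a single good makes them admissible in the
definition of the AnyPrice share, and raising prices only shrinks the set of affordable bundles.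
The minimum over admissible prices is therefore at most the best value affordable at the equilibrium
prices, which is what the agent receives.
-/

theorem exists_le_and_sum_eq {ι α : Type*} [AddCommGroup α] [PartialOrder α]
    [IsOrderedAddMonoid α] {M : Finset ι} (hM : M.Nonempty) {p : ι → α} {c : α}
    (hp : ∑ j ∈ M, p j ≤ c) : ∃ q : ι → α, p ≤ q ∧ ∑ j ∈ M, q j = c := by
  classical
  obtain ⟨j₀, hj₀⟩ := hM
  refine ⟨p + Pi.single j₀ (c - ∑ j ∈ M, p j),
    le_add_of_nonneg_right (Pi.single_nonneg.mpr (sub_nonneg.mpr hp)), ?_⟩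
  simp only [Pi.add_apply, sum_add_distrib, sum_pi_single', hj₀, if_true, add_sub_cancel]

section AffordableValues

variable {ι : Type*} {b : ℝ} {v : Finset ι → ℝ} {M : Finset ι} {p q : ι → ℝ}

/-- The values of the bundles affordable with budget `b` at prices `p`. The set is written exactly
as in `APS`, so that `APS b v M` is by definition the infimum of the numbers
`sSup (affordableValues b v M p)` over normalized prices `p`. -/
def affordableValues (b : ℝ) (v : Finset ι → ℝ) (M : Finset ι) (p : ι → ℝ) : Set ℝ :=
  {u : ℝ | ∃ S, S ⊆ M ∧ ∑ j ∈ S, p j ≤ b ∧ u = v S}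

theorem affordableValues_subset_image : affordableValues b v M p ⊆ v '' M.powerset := by
  rintro _ ⟨S, hSM, -, rfl⟩
  exact Set.mem_image_of_mem v (mem_coe.mpr (mem_powerset.mpr hSM))

theorem finite_affordableValues : (affordableValues b v M p).Finite :=
  (M.powerset.finite_toSet.image v).subset affordableValues_subset_image

theorem affordableValues_nonempty (hb : 0 ≤ b) : (affordableValues b v M p).Nonempty :=
  ⟨v ∅, ∅, empty_subset M, by rwa [sum_empty], rfl⟩

theorem affordableValues_anti (hpq : ∀ j ∈ M, p j ≤ q j) :
    affordableValues b v M q ⊆ affordableValues b v M p := by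
  rintro _ ⟨S, hSM, hSb, rfl⟩
  exact ⟨S, hSM, (sum_le_sum fun j hj => hpq j (hSM hj)).trans hSb, rfl⟩

theorem sSup_affordableValues_anti (hb : 0 ≤ b) (hpq : ∀ j ∈ M, p j ≤ q j) :
    sSup (affordableValues b v M q) ≤ sSup (affordableValues b v M p) :=
  csSup_le_csSup finite_affordableValues.bddAbove (affordableValues_nonempty hb)
    (affordableValues_anti hpq)

theorem finite_range_sSup_affordableValues (b : ℝ) (v : Finset ι → ℝ) (M : Finset ι) :
    (Set.range fun p => sSup (affordableValues b v M p)).Finite := by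
  refine ((M.powerset.finite_toSet.image v).finite_subsets.image sSup).subset ?_
  rintro _ ⟨p, rfl⟩
  exact Set.mem_image_of_mem sSup affordableValues_subset_image

theorem APS_le_sSup_affordableValues (hp : ∀ j ∈ M, 0 ≤ p j) (hsum : ∑ j ∈ M, p j = 1) :
    APS b v M ≤ sSup (affordableValues b v M p) := by
  refine csInf_le ((finite_range_sSup_affordableValues b v M).bddBelow.mono ?_) ⟨p, hp, hsum, rfl⟩
  rintro _ ⟨r, -, -, rfl⟩
  exact ⟨r, rfl⟩

theorem APS_le_sSup_affordableValues_of_sum_le_one (hM : M.Nonempty) (hb : 0 ≤ b)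
    (hp : ∀ j ∈ M, 0 ≤ p j) (hsum : ∑ j ∈ M, p j ≤ 1) :
    APS b v M ≤ sSup (affordableValues b v M p) := by
  obtain ⟨q, hpq, hq⟩ := exists_le_and_sum_eq hM hsum
  calc APS b v M
      ≤ sSup (affordableValues b v M q) :=
        APS_le_sSup_affordableValues (fun j hj => (hp j hj).trans (hpq j)) hq
    _ ≤ sSup (affordableValues b v M p) := sSup_affordableValues_anti hb fun j _ => hpq j

/-- Junk value: no price vector on the empty set sums to `1`, and `sInf ∅ = 0`. -/
theorem APS_empty : APS b v ∅ = 0 := by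
  simp only [APS, sum_empty, zero_ne_one, false_and, and_false, exists_false, Set.ofPred_false,
    Real.sInf_empty]

end AffordableValues

theorem IsPartition.sum_sum_eq {ι α : Type*} [DecidableEq ι] [AddCommMonoid α] {M : Finset ι}
    {n : ℕ} {A : Fin n → Finset ι} (hA : IsPartition M A) (f : ι → α) :
    ∑ i, ∑ j ∈ A i, f j = ∑ j ∈ M, f j := by
  obtain ⟨hsub, hdisj, hcover⟩ := hA
  have hM : univ.biUnion A = M := by
    ext x
    simp only [mem_biUnion, mem_univ, true_and]
    exact ⟨fun ⟨i, hi⟩ => hsub i hi, hcover x⟩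
  rw [← hM, sum_biUnion fun i _ k _ hik => hdisj i k hik]

namespace IsCE

variable {ι : Type*} [DecidableEq ι] {n : ℕ} {v : Fin n → Finset ι → ℝ} {b : Fin n → ℝ}
  {M : Finset ι} {A : Fin n → Finset ι} {p : ι → ℝ}

theorem sum_prices_le_sum_budgets (h : IsCE v b M A p) : ∑ j ∈ M, p j ≤ ∑ i, b i := by
  obtain ⟨hA, -, hbudget, -⟩ := h
  rw [← hA.sum_sum_eq]
  exact sum_le_sum fun i _ => hbudget i

theorem budget_nonneg (h : IsCE v b M A p) (i : Fin n) : 0 ≤ b i := by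
  obtain ⟨⟨hsub, -⟩, hp, hbudget, -⟩ := h
  exact (sum_nonneg fun j hj => hp j (hsub i hj)).trans (hbudget i)

theorem isGreatest_affordableValues (h : IsCE v b M A p) (i : Fin n) :
    IsGreatest (affordableValues (b i) (v i) M p) (v i (A i)) := by
  obtain ⟨⟨hsub, -⟩, -, hbudget, hopt⟩ := h
  refine ⟨⟨A i, hsub i, hbudget i, rfl⟩, ?_⟩
  rintro _ ⟨S, hSM, hSb, rfl⟩
  exact hopt i S hSM hSb

end IsCE

theorem ce_gives_aps_general {ι : Type*} [DecidableEq ι] {n : ℕ} (M : Finset ι)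
    (v : Fin n → Finset ι → ℝ) (b : Fin n → ℝ) (hnorm : ∀ i, v i ∅ = 0) (hbsum : ∑ i, b i ≤ 1)
    (A : Fin n → Finset ι) (p : ι → ℝ) (hCE : IsCE v b M A p) (i : Fin n) :
    APS (b i) (v i) M ≤ v i (A i) := by
  rcases M.eq_empty_or_nonempty with rfl | hM
  · rw [subset_empty.mp (hCE.1.1 i), hnorm, APS_empty]
  · calc APS (b i) (v i) M
        ≤ sSup (affordableValues (b i) (v i) M p) :=
          APS_le_sSup_affordableValues_of_sum_le_one hM (hCE.budget_nonneg i) hCE.2.1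
            (hCE.sum_prices_le_sum_budgets.trans hbsum)
      _ = v i (A i) := (hCE.isGreatest_affordableValues i).csSup_eq

/-- In every competitive equilibrium with entitlements as budgets, every agent receives
at least her AnyPrice share. -/
theorem ce_gives_aps {ι : Type*} [DecidableEq ι] {n : ℕ} (M : Finset ι)
    (v : Fin n → Finset ι → ℝ) (b : Fin n → ℝ)
    (hnorm : ∀ i, v i ∅ = 0)
    (hmono : ∀ i, ∀ S T : Finset ι, S ⊆ T → T ⊆ M → v i S ≤ v i T)
    (hnonneg : ∀ i, ∀ S : Finset ι, S ⊆ M → 0 ≤ v i S)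
    (hb : ∀ i, 0 < b i) (hbsum : ∑ i, b i = 1)
    (A : Fin n → Finset ι) (p : ι → ℝ) (hCE : IsCE v b M A p) :
    ∀ i, APS (b i) (v i) M ≤ v i (A i) :=
  ce_gives_aps_general M v b hnorm hbsum.le A p hCE
end

section
/- For every additive valuation v over a finite set M of indivisible goods and every entitlement b with 0 < b ≤ 1, the following chain of inequalities holds: b·v(M) ≥ APS(b, v, M) ≥ Pessimistic(b, v, M) ≥ (1/2)·APS(b, v, M). -/
/-!
Prices proportional to values bound the AnyPrice share by `b * v(M)`. Given an `ℓ`-out-of-`d`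
partition and any prices, the `ℓ` cheapest bundles cost at most `ℓ / d ≤ b` together, so the
pessimistic share is at most the AnyPrice share.

For the last inequality take `ℓ = 1` and `d = n + 1 = ⌈1 / b⌉`. Since `n * b < 1`, prices of total
at most `n` always leave a bundle of price less than `1` worth `2 * h`, where `2 * h` is the
AnyPrice share, and it suffices to split the goods into `n + 1` bundles worth `h`. A good worth `h`
forms a bundle alone: pricing it at `1` shows that the rest satisfies the hypothesis for `n - 1`.
Now let all goods be worth less than `h`, and call those worth more than `h / 2` large. Proportional
prices give total value at least `2 * h * n`. When `n ≥ 2` and at most `2 * n - 2` goods are large,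
matching some of the large goods in pairs and greedily completing the others with small goods
wastes little enough. Otherwise `n - 1` pairs of large goods form bundles, and the price `1 / 2` on
these goods and on two further ones bounds the value of the rest well enough to split it in two.
-/

open Finset

/-- The pessimistic share: the maximum ℓ-out-of-d share over all positive integers
`l, d` with `l / d ≤ b`. -/
noncomputable def Pessimistic {ι : Type*} [DecidableEq ι] (b : ℝ) (v : Finset ι → ℝ) (M : Finset ι) : ℝ :=
  sSup {t : ℝ | ∃ l d : ℕ, 0 < l ∧ 0 < d ∧ (l : ℝ) / d ≤ b ∧
    ∃ P : Fin d → Finset ι, IsPartition M P ∧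
      ∀ J : Finset (Fin d), J.card = l → t ≤ v (J.biUnion P)}

section Sums

variable {κ : Type*} {s : Finset κ}

theorem sum_le_mul_of_card_le {f : κ → ℝ} {x : ℝ} {n : ℕ} (hx : 0 ≤ x)
    (hf : ∀ j ∈ s, f j ≤ x) (hn : #s ≤ n) : ∑ j ∈ s, f j ≤ n * x :=
  calc
    ∑ j ∈ s, f j ≤ #s * x := by simpa using sum_le_card_nsmul s f x hf
    _ ≤ n * x := by gcongr

theorem exists_subset_sum_mem_Icc [DecidableEq κ] {f : κ → ℝ} {t : Finset κ} {g y : ℝ} (hts : t ⊆ s)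
    (ht : ∑ j ∈ t, f j ≤ g + y) (hy : ∀ j ∈ s \ t, f j ≤ y) (hs : g ≤ ∑ j ∈ s, f j) :
    ∃ u, t ⊆ u ∧ u ⊆ s ∧ ∑ j ∈ u, f j ∈ Set.Icc g (g + y) := by
  induction s using Finset.strongInduction with
  | H s ih =>
    rcases hts.eq_or_ssubset with rfl | hlt
    · exact ⟨t, Subset.rfl, Subset.rfl, hs, ht⟩
    obtain ⟨a, ha, hat⟩ := exists_of_ssubset hlt
    have hsum := add_sum_erase s f ha
    rcases le_or_gt g (∑ j ∈ s.erase a, f j) with hg | hg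
    · obtain ⟨u, htu, hus, hu⟩ := ih (s.erase a) (erase_ssubset ha)
        (subset_erase.2 ⟨hts, hat⟩)
        (fun j hj => hy j (sdiff_subset_sdiff (erase_subset a s) Subset.rfl hj)) hg
      exact ⟨u, htu, hus.trans (erase_subset a s), hu⟩
    · have hay := hy a (mem_sdiff.2 ⟨ha, hat⟩)
      exact ⟨s, hts, Subset.rfl, hs, by linarith⟩

theorem exists_subset_card_eq_mul_sum_le (q : κ → ℝ) {l : ℕ} (hl : l ≤ #s) :
    ∃ t ⊆ s, #t = l ∧ #s * ∑ i ∈ t, q i ≤ l * ∑ i ∈ s, q i := by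
  classical
  induction s using Finset.induction_on_max_value q with
  | empty => exact ⟨∅, Subset.rfl, by simpa [eq_comm] using hl, by simp⟩
  | insert a s ha hmax ih =>
    rcases hl.eq_or_lt with rfl | hlt
    · exact ⟨insert a s, Subset.rfl, rfl, le_rfl⟩
    rw [card_insert_of_notMem ha, Nat.lt_succ_iff] at hlt
    obtain ⟨t, hts, rfl, ht⟩ := ih hlt
    refine ⟨t, hts.trans (subset_insert a s), rfl, ?_⟩
    have hta : ∑ i ∈ t, q i ≤ #t * q a := by
      simpa using sum_le_card_nsmul t q (q a) fun i hi => hmax i (hts hi)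
    rw [card_insert_of_notMem ha, sum_insert ha]
    push_cast
    linarith

end Sums

section AnyPrice

variable {ι : Type*} {b t : ℝ} {v : Finset ι → ℝ} {M : Finset ι}

theorem finite_affordable_values (b : ℝ) (v : Finset ι → ℝ) (M : Finset ι) (p : ι → ℝ) :
    {u | ∃ S, S ⊆ M ∧ ∑ j ∈ S, p j ≤ b ∧ u = v S}.Finite :=
  (M.powerset.finite_toSet.image v).subset fun _ ⟨S, hS, _, hu⟩ =>
    ⟨S, mem_coe.2 (mem_powerset.2 hS), hu.symm⟩

theorem exists_affordable_aps_le (hb : 0 ≤ b) {p : ι → ℝ} (hp : ∀ j ∈ M, 0 ≤ p j)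
    (hp1 : ∑ j ∈ M, p j = 1) : ∃ S ⊆ M, ∑ j ∈ S, p j ≤ b ∧ APS b v M ≤ v S := by
  have empty_mem (q : ι → ℝ) : v ∅ ∈ {u | ∃ S, S ⊆ M ∧ ∑ j ∈ S, q j ≤ b ∧ u = v S} :=
    ⟨∅, empty_subset M, by simpa using hb, rfl⟩
  obtain ⟨S, hS, hSb, hSv⟩ := Set.Nonempty.csSup_mem ⟨_, empty_mem p⟩
    (finite_affordable_values b v M p)
  refine ⟨S, hS, hSb, hSv ▸ csInf_le ⟨v ∅, ?_⟩ ⟨p, hp, hp1, rfl⟩⟩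
  rintro _ ⟨q, -, -, rfl⟩
  exact le_csSup (finite_affordable_values b v M q).bddAbove (empty_mem q)

-- No price vector on `∅` has total `1`, so the infimum is over the empty set.
theorem aps_empty (b : ℝ) (v : Finset ι → ℝ) : APS b v ∅ = 0 := by simp [APS]

theorem exists_prices (hM : M.Nonempty) :
    ∃ p : ι → ℝ, (∀ j ∈ M, 0 ≤ p j) ∧ ∑ j ∈ M, p j = 1 :=
  ⟨fun _ => (#M : ℝ)⁻¹, fun _ _ => by positivity, by simp [hM.ne_empty]⟩

theorem le_aps (hM : M.Nonempty) (h : ∀ p : ι → ℝ, (∀ j ∈ M, 0 ≤ p j) → ∑ j ∈ M, p j = 1 →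
    ∃ S ⊆ M, ∑ j ∈ S, p j ≤ b ∧ t ≤ v S) : t ≤ APS b v M := by
  obtain ⟨p, hp, hp1⟩ := exists_prices hM
  refine le_csInf ⟨_, p, hp, hp1, rfl⟩ ?_
  rintro _ ⟨q, hq, hq1, rfl⟩
  obtain ⟨S, hS, hSb, hSv⟩ := h q hq hq1
  exact le_csSup_of_le (finite_affordable_values b v M q).bddAbove ⟨S, hS, hSb, rfl⟩ hSv

theorem aps_nonneg (hb : 0 ≤ b) (hv : v ∅ = 0) : 0 ≤ APS b v M := by
  rcases M.eq_empty_or_nonempty with rfl | hM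
  · exact (aps_empty b v).ge
  · exact le_aps hM fun p _ _ => ⟨∅, empty_subset M, by simpa using hb, hv.ge⟩

theorem exists_subset_aps_le (hb : 0 ≤ b) (hv : v ∅ = 0) : ∃ S ⊆ M, APS b v M ≤ v S := by
  rcases M.eq_empty_or_nonempty with rfl | hM
  · exact ⟨∅, Subset.rfl, by rw [aps_empty, hv]⟩
  · obtain ⟨p, hp, hp1⟩ := exists_prices hM
    obtain ⟨S, hS, -, hSv⟩ := exists_affordable_aps_le hb hp hp1 (v := v)
    exact ⟨S, hS, hSv⟩

theorem aps_le_mul_sum {w : ι → ℝ} (hb : 0 ≤ b) (hw : ∀ j ∈ M, 0 ≤ w j) :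
    APS b (∑ j ∈ ·, w j) M ≤ b * ∑ j ∈ M, w j := by
  rcases (sum_nonneg hw).eq_or_lt with h0 | hpos
  · obtain ⟨S, hS, hSv⟩ := exists_subset_aps_le (M := M) (v := (∑ j ∈ ·, w j)) hb sum_empty
    calc
      APS b (∑ j ∈ ·, w j) M ≤ ∑ j ∈ S, w j := hSv
      _ ≤ ∑ j ∈ M, w j := sum_le_sum_of_subset_of_nonneg hS fun j hj _ => hw j hj
      _ = b * ∑ j ∈ M, w j := by rw [← h0, mul_zero]
  · obtain ⟨S, -, hSb, hSv⟩ := exists_affordable_aps_le (p := fun j => w j / ∑ i ∈ M, w i) hb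
      (fun j hj => div_nonneg (hw j hj) hpos.le) (by rw [← sum_div, div_self hpos.ne'])
    rw [← sum_div, div_le_iff₀ hpos] at hSb
    exact hSv.trans hSb

end AnyPrice

section Partition

variable {ι : Type*} [DecidableEq ι] {A B M : Finset ι}

theorem IsPartition.biUnion_univ {d : ℕ} {P : Fin d → Finset ι} (hP : IsPartition M P) :
    univ.biUnion P = M :=
  Subset.antisymm (biUnion_subset.2 fun i _ => hP.1 i) fun x hx => by simpa using hP.2.2 x hx

theorem IsPartition.sum_biUnion {d : ℕ} {P : Fin d → Finset ι} (hP : IsPartition M P)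
    (p : ι → ℝ) (J : Finset (Fin d)) : ∑ j ∈ J.biUnion P, p j = ∑ i ∈ J, ∑ j ∈ P i, p j :=
  Finset.sum_biUnion fun i _ k _ hik => hP.2.1 i k hik

theorem IsPartition.const (A : Finset ι) : IsPartition A fun _ : Fin 1 => A :=
  ⟨fun _ => Subset.rfl, fun i k hik => absurd (Subsingleton.elim i k) hik, fun _ hx => ⟨0, hx⟩⟩

theorem IsPartition.cons {n : ℕ} {P : Fin n → Finset ι} (hBA : B ⊆ A)
    (hP : IsPartition (A \ B) P) : IsPartition A (Fin.cons B P : Fin (n + 1) → Finset ι) := by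
  have disjoint_B (i : Fin n) : Disjoint (P i) B := disjoint_of_subset_left (hP.1 i) sdiff_disjoint
  refine ⟨Fin.cases hBA fun i => (hP.1 i).trans sdiff_subset, fun i k hik => ?_, fun x hx => ?_⟩
  · cases i using Fin.cases <;> cases k using Fin.cases
    · exact absurd rfl hik
    · exact (disjoint_B _).symm
    · exact disjoint_B _
    · exact hP.2.1 _ _ fun h => hik (congrArg Fin.succ h)
  · by_cases hxB : x ∈ B
    · exact ⟨0, hxB⟩
    · obtain ⟨i, hi⟩ := hP.2.2 x (mem_sdiff.2 ⟨hx, hxB⟩)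
      exact ⟨i.succ, hi⟩

/-- The 1-out-of-`k` share of `v` over `A` is at least `h`: some partition of `A` into `k` bundles
gives every bundle value at least `h`. -/
def CanSplit (v : Finset ι → ℝ) (h : ℝ) (k : ℕ) (A : Finset ι) : Prop :=
  ∃ P : Fin k → Finset ι, IsPartition A P ∧ ∀ i, h ≤ v (P i)

variable {v : Finset ι → ℝ} {w : ι → ℝ} {h : ℝ}

theorem CanSplit.one (hA : h ≤ v A) : CanSplit v h 1 A :=
  ⟨fun _ => A, .const A, fun _ => hA⟩

theorem CanSplit.cons {k : ℕ} (hBA : B ⊆ A) (hB : h ≤ v B) (hc : CanSplit v h k (A \ B)) :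
    CanSplit v h (k + 1) A := by
  obtain ⟨P, hP, hPv⟩ := hc
  exact ⟨Fin.cons B P, hP.cons hBA, Fin.cases hB hPv⟩

theorem CanSplit.of_le_empty (hA : h ≤ v A) (h_empty : h ≤ v ∅) (n : ℕ) :
    CanSplit v h (n + 1) A := by
  induction n with
  | zero => exact .one hA
  | succ n ih => exact .cons (empty_subset A) h_empty (by rwa [sdiff_empty])

theorem CanSplit.of_pairs {C : Finset ι} {k m : ℕ} (hCA : C ⊆ A) (hcard : #C = 2 * k)
    (hC : ∀ j ∈ C, h / 2 ≤ w j) (hc : CanSplit (∑ j ∈ ·, w j) h m (A \ C)) :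
    CanSplit (∑ j ∈ ·, w j) h (m + k) A := by
  induction k generalizing A C with
  | zero =>
    rw [card_eq_zero.1 hcard, sdiff_empty] at hc
    exact hc
  | succ k ih =>
    obtain ⟨B, hBC, hBcard⟩ := exists_subset_card_eq (s := C) (n := 2) (by lia)
    have hB : h ≤ ∑ j ∈ B, w j := by
      have := card_nsmul_le_sum B w (h / 2) fun j hj => hC j (hBC hj)
      rw [hBcard, two_nsmul] at this
      linarith
    refine .cons (hBC.trans hCA) hB (ih (sdiff_subset_sdiff hCA Subset.rfl) ?_ ?_ ?_)
    · rw [card_sdiff_of_subset hBC]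
      lia
    · exact fun j hj => hC j (sdiff_subset hj)
    · rwa [sdiff_sdiff_left, sup_eq_union, union_sdiff_of_subset hBC]

end Partition

section Pessimistic

variable {ι : Type*} [DecidableEq ι] {b h t : ℝ} {v : Finset ι → ℝ} {M : Finset ι}

theorem le_aps_of_isPartition (hv : v ∅ = 0) (hb1 : b ≤ 1) {l d : ℕ} (hd : 0 < d)
    (hld : (l : ℝ) / d ≤ b) {P : Fin d → Finset ι} (hP : IsPartition M P)
    (hJ : ∀ J : Finset (Fin d), #J = l → t ≤ v (J.biUnion P)) : t ≤ APS b v M := by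
  have hd' : (0 : ℝ) < d := mod_cast hd
  have hl : l ≤ d := mod_cast (div_le_one₀ hd').1 (hld.trans hb1)
  have hJM (J : Finset (Fin d)) : J.biUnion P ⊆ M := biUnion_subset.2 fun i _ => hP.1 i
  have exists_cheap (p : ι → ℝ) : ∃ J : Finset (Fin d), #J = l ∧
      d * ∑ j ∈ J.biUnion P, p j ≤ l * ∑ j ∈ M, p j := by
    obtain ⟨J, -, hJl, hJp⟩ := exists_subset_card_eq_mul_sum_le (s := univ)
      (fun i => ∑ j ∈ P i, p j) (hl.trans_eq (card_fin d).symm)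
    rw [← hP.sum_biUnion, ← hP.sum_biUnion, hP.biUnion_univ, card_fin] at hJp
    exact ⟨J, hJl, hJp⟩
  rcases M.eq_empty_or_nonempty with rfl | hM
  · obtain ⟨J, hJl, -⟩ := exists_cheap 0
    have ht := hJ J hJl
    rwa [subset_empty.1 (hJM J), hv, ← aps_empty b v] at ht
  · refine le_aps hM fun p _ hp1 => ?_
    obtain ⟨J, hJl, hJp⟩ := exists_cheap p
    refine ⟨J.biUnion P, hJM J, le_trans ?_ hld, hJ J hJl⟩
    rwa [le_div_iff₀' hd', ← mul_one (l : ℝ), ← hp1]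

theorem pessimistic_le_aps (hv : v ∅ = 0) (hb0 : 0 ≤ b) (hb1 : b ≤ 1) :
    Pessimistic b v M ≤ APS b v M := by
  refine Real.sSup_le ?_ (aps_nonneg hb0 hv)
  rintro t ⟨l, d, -, hd, hld, P, hP, hJ⟩
  exact le_aps_of_isPartition hv hb1 hd hld hP hJ

theorem CanSplit.le_pessimistic (hv : v ∅ = 0) (hb1 : b ≤ 1) {d : ℕ} (hd : 0 < d)
    (hdb : 1 / (d : ℝ) ≤ b) (hc : CanSplit v h d M) : h ≤ Pessimistic b v M := by
  obtain ⟨P, hP, hPv⟩ := hc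
  refine le_csSup ⟨APS b v M, ?_⟩ ⟨1, d, one_pos, hd, mod_cast hdb, P, hP, fun J hJ => ?_⟩
  · rintro t ⟨l, d', -, hd', hld, Q, hQ, hJ⟩
    exact le_aps_of_isPartition hv hb1 hd' hld hQ hJ
  · obtain ⟨i, rfl⟩ := card_eq_one.1 hJ
    rw [singleton_biUnion]
    exact hPv i

end Pessimistic

section PriceRobust

variable {ι : Type*}

/-- However the goods of `A` are priced with total price at most `c`, some bundle of price less
than `1` has value at least `z`. This is a strict form of `z ≤ APS (1 / c) v A`, scaled so that the
budget rather than the total price is `1`: removing a good and lowering `c` by `1` then preserves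
the condition. -/
def PriceRobust (v : Finset ι → ℝ) (z c : ℝ) (A : Finset ι) : Prop :=
  ∀ p : ι → ℝ, (∀ j ∈ A, 0 ≤ p j) → ∑ j ∈ A, p j ≤ c → ∃ S ⊆ A, ∑ j ∈ S, p j < 1 ∧ z ≤ v S

theorem priceRobust_aps {b c : ℝ} {v : Finset ι → ℝ} {M : Finset ι} (hv : v ∅ = 0) (hb : 0 ≤ b)
    (hcb : c * b < 1) : PriceRobust v (APS b v M) c M := by
  intro p hp hpc
  rcases (sum_nonneg hp).eq_or_lt with h0 | hpos
  · obtain ⟨S, hS, hSv⟩ := exists_subset_aps_le (M := M) hb hv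
    have hpS := sum_le_sum_of_subset_of_nonneg hS fun j hj _ => hp j hj
    exact ⟨S, hS, by linarith, hSv⟩
  · obtain ⟨S, hS, hSb, hSv⟩ := exists_affordable_aps_le (p := fun j => p j / ∑ i ∈ M, p i)
      (v := v) hb (fun j hj => div_nonneg (hp j hj) hpos.le) (by rw [← sum_div, div_self hpos.ne'])
    rw [← sum_div, div_le_iff₀ hpos] at hSb
    refine ⟨S, hS, ?_, hSv⟩
    calc
      ∑ j ∈ S, p j ≤ b * ∑ j ∈ M, p j := hSb
      _ ≤ b * c := by gcongr
      _ < 1 := by rwa [mul_comm]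

variable {A : Finset ι} {w : ι → ℝ} {z c : ℝ}

theorem PriceRobust.mul_le_sum (hc : PriceRobust (∑ j ∈ ·, w j) z c A) (hw : ∀ j ∈ A, 0 ≤ w j)
    (hc0 : 0 ≤ c) : z * c ≤ ∑ j ∈ A, w j := by
  rcases (sum_nonneg hw).eq_or_lt with h0 | hpos
  · obtain ⟨S, hS, -, hzS⟩ := hc 0 (by simp) (by simpa using hc0)
    have hSA : ∑ j ∈ S, w j ≤ ∑ j ∈ A, w j :=
      sum_le_sum_of_subset_of_nonneg hS fun j hj _ => hw j hj
    rw [← h0] at hSA ⊢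
    exact mul_nonpos_of_nonpos_of_nonneg (hzS.trans hSA) hc0
  · obtain ⟨S, -, hSp, hzS⟩ := hc (fun j => c / (∑ i ∈ A, w i) * w j)
      (fun j hj => mul_nonneg (by positivity) (hw j hj)) (by
        rw [← mul_sum, div_mul_cancel₀ _ hpos.ne'])
    rw [← mul_sum, div_mul_eq_mul_div, div_lt_one hpos] at hSp
    calc
      z * c ≤ (∑ j ∈ S, w j) * c := by gcongr
      _ ≤ ∑ j ∈ A, w j := by linarith

variable [DecidableEq ι]

theorem PriceRobust.sdiff_singleton {v : Finset ι → ℝ} (hc : PriceRobust v z (c + 1) A) {x : ι}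
    (hx : x ∈ A) : PriceRobust v z c (A \ {x}) := by
  intro p hp hpc
  have hq (j : ι) (hj : j ∈ A) : 0 ≤ Function.update p x 1 j := by
    rcases eq_or_ne j x with rfl | hjx
    · simp
    · simpa [hjx] using hp j (by simp [hj, hjx])
  obtain ⟨S, hS, hSp, hSv⟩ := hc (Function.update p x 1) hq (by
    rw [sum_update_of_mem hx]
    linarith)
  have hxS : x ∉ S := fun hxS => by
    have := single_le_sum (fun j hj => hq j (hS hj)) hxS
    rw [Function.update_self] at this
    linarith
  rw [sum_update_of_notMem hxS] at hSp
  exact ⟨S, subset_sdiff.2 ⟨hS, disjoint_singleton_right.2 hxS⟩, hSp, hSv⟩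

theorem PriceRobust.le_add_sum_sdiff (hc : PriceRobust (∑ j ∈ ·, w j) z c A)
    (hw : ∀ j ∈ A, 0 ≤ w j) {E : Finset ι} (hE : #E ≤ 2 * c) {x : ℝ} (hx : 0 ≤ x)
    (hEx : ∀ j ∈ E, w j ≤ x) : z ≤ x + ∑ j ∈ A \ E, w j := by
  have price (T : Finset ι) : ∑ j ∈ T, (if j ∈ E then 1 / 2 else 0 : ℝ) = #(T ∩ E) / 2 := by
    rw [sum_ite_mem, sum_const, nsmul_eq_mul, mul_one_div]
  obtain ⟨S, hS, hSp, hzS⟩ := hc (fun j => if j ∈ E then 1 / 2 else 0) (fun j _ => by positivity)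
    (by
      have : (#(A ∩ E) : ℝ) ≤ #E := mod_cast card_le_card inter_subset_right
      rw [price]
      linarith)
  have hcard : #(S ∩ E) ≤ 1 := by
    rw [price, div_lt_one two_pos] at hSp
    exact Nat.lt_succ_iff.1 (mod_cast hSp)
  calc
    z ≤ ∑ j ∈ S ∩ E, w j + ∑ j ∈ S \ E, w j := by rwa [sum_inter_add_sum_sdiff]
    _ ≤ x + ∑ j ∈ A \ E, w j := by
      refine add_le_add ?_ (sum_le_sum_of_subset_of_nonneg (sdiff_subset_sdiff hS Subset.rfl)
        fun j hj _ => hw j (sdiff_subset hj))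
      simpa using sum_le_mul_of_card_le hx (fun j hj => hEx j (mem_inter.1 hj).2) hcard

theorem PriceRobust.exists_forall_le_add_le_sum_sdiff (hc : PriceRobust (∑ j ∈ ·, w j) z c A)
    (hw : ∀ j ∈ A, 0 ≤ w j) {x : ι} (hx : x ∈ A) (hmax : ∀ j ∈ A, w j ≤ w x) (hxz : w x < z)
    {P : Finset ι} (hP : P ⊆ A.erase x) (hPc : #P + 2 ≤ 2 * c) :
    ∃ y, 0 ≤ y ∧ (∀ j ∈ (A \ P).erase x, w j ≤ y) ∧ z + y ≤ ∑ j ∈ A \ P, w j := by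
  obtain ⟨hPA, hxP⟩ := subset_erase.1 hP
  have hcard : (#(insert x P) : ℝ) = #P + 1 := mod_cast card_insert_of_notMem hxP
  rcases ((A \ P).erase x).eq_empty_or_nonempty with hD | hD
  · have hbound := hc.le_add_sum_sdiff hw (E := insert x P) (by linarith) (hw x hx) (by grind)
    rw [show A \ insert x P = ∅ by grind, sum_empty] at hbound
    linarith
  · obtain ⟨y, hy, hymax⟩ := exists_max_image _ w hD
    have hcard' : (#(insert y (insert x P)) : ℝ) = #(insert x P) + 1 :=
      mod_cast card_insert_of_notMem (by grind)
    have hbound := hc.le_add_sum_sdiff hw (E := insert y (insert x P)) (by linarith) (hw x hx)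
      (by grind)
    rw [show A \ insert y (insert x P) = ((A \ P).erase x).erase y by grind] at hbound
    refine ⟨w y, hw y (by grind), hymax, ?_⟩
    rw [← add_sum_erase _ w (mem_sdiff.2 ⟨hx, hxP⟩), ← add_sum_erase _ w hy]
    linarith

end PriceRobust

section Splitting

variable {ι : Type*} [DecidableEq ι] {A : Finset ι} {w : ι → ℝ} {h : ℝ} {n : ℕ}

theorem canSplit_of_card_large_le (hh : 0 ≤ h) (hA : ∀ j ∈ A, w j ≤ h)
    (hcard : #{j ∈ A | h / 2 < w j} ≤ n) (hsum : 3 / 2 * h * n + h ≤ ∑ j ∈ A, w j) :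
    CanSplit (∑ j ∈ ·, w j) h (n + 1) A := by
  induction n generalizing A with
  | zero => exact .one (by simpa using hsum)
  | succ n ih =>
    push_cast at hsum
    set C := {j ∈ A | h / 2 < w j}
    have hCA : C ⊆ A := filter_subset _ A
    obtain ⟨S, hSC, hScard⟩ := exists_subset_card_eq (min_le_right 1 #C)
    have hrest_card : #(C \ S) ≤ n := by
      rw [card_sdiff_of_subset hSC]
      lia
    have hS_sum : ∑ j ∈ S, w j ≤ (1 : ℕ) * h :=
      sum_le_mul_of_card_le hh (fun j hj => hA j (hCA (hSC hj))) (hScard.trans_le (min_le_left _ _))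
    have hrest_sum : ∑ j ∈ C \ S, w j ≤ n * h :=
      sum_le_mul_of_card_le hh (fun j hj => hA j (hCA (sdiff_subset hj))) hrest_card
    have hsplit := sum_sdiff (f := w) (sdiff_subset.trans hCA : C \ S ⊆ A)
    have hnh : 0 ≤ n * h := by positivity
    -- Completing at most one large good by small ones wastes at most `h / 2` per bundle.
    obtain ⟨B, hSB, hBA, hB, hB'⟩ := exists_subset_sum_mem_Icc (s := A \ (C \ S)) (t := S)
      (f := w) (g := h) (y := h / 2) (by grind) (by push_cast at hS_sum; linarith)
      (fun j hj => by grind) (by linarith)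
    have hBsub : B ⊆ A := hBA.trans sdiff_subset
    refine .cons hBsub hB (ih (fun j hj => hA j (sdiff_subset hj)) ?_ ?_)
    · exact (card_le_card (by grind)).trans hrest_card
    · have := sum_sdiff (f := w) hBsub
      linarith

theorem canSplit_of_two_mul_le_sum (hh : 0 ≤ h) (hA : ∀ j ∈ A, w j ≤ h) (hn : 0 < n)
    (hcard : #{j ∈ A | h / 2 < w j} ≤ 2 * n) (hsum : 2 * h * (n + 1) ≤ ∑ j ∈ A, w j) :
    CanSplit (∑ j ∈ ·, w j) h (n + 2) A := by
  set C := {j ∈ A | h / 2 < w j}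
  have hCA : C ⊆ A := filter_subset _ A
  -- Making `k` pairs leaves `m + 1 ≥ 3` bundles to form and at most `m` large goods.
  obtain ⟨k, m, hm, hkm, hCk, hCm⟩ : ∃ k m, 2 ≤ m ∧ m + k = n + 1 ∧ 2 * k ≤ #C ∧ #C ≤ m + 2 * k :=
    ⟨#C - (n + 1), n + 1 - (#C - (n + 1)), by lia, by lia, by lia, by lia⟩
  obtain ⟨P, hPC, hPcard⟩ := exists_subset_card_eq hCk
  have hP_sum : ∑ j ∈ P, w j ≤ (2 * k : ℕ) * h :=
    sum_le_mul_of_card_le hh (fun j hj => hA j (hCA (hPC hj))) hPcard.le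
  have hsplit := sum_sdiff (f := w) (hPC.trans hCA)
  rw [show n + 2 = m + 1 + k by lia]
  refine .of_pairs (hPC.trans hCA) hPcard (fun j hj => (mem_filter.1 (hPC hj)).2.le)
    (canSplit_of_card_large_le hh (fun j hj => hA j (sdiff_subset hj)) ?_ ?_)
  · have : #{j ∈ A \ P | h / 2 < w j} ≤ #(C \ P) := card_le_card (by grind)
    rw [card_sdiff_of_subset hPC] at this
    lia
  · have hm' : 2 * h ≤ m * h := by gcongr; exact_mod_cast hm
    have hkm' : (m : ℝ) + k = n + 1 := mod_cast hkm
    rw [← hkm'] at hsum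
    push_cast at hP_sum
    linarith

theorem canSplit_two_of_add_le_sum {x : ι} {y : ℝ} (hx : x ∈ A) (hx0 : 0 ≤ w x)
    (hxh : w x ≤ h + y) (hy : ∀ j ∈ A.erase x, w j ≤ y) (hsum : 2 * h + y ≤ ∑ j ∈ A, w j) :
    CanSplit (∑ j ∈ ·, w j) h 2 A := by
  obtain ⟨B, -, hBA, hB, hB'⟩ := exists_subset_sum_mem_Icc (s := A) (t := {x}) (f := w)
    (g := h) (y := y) (by simpa using hx) (by simpa using hxh)
    (by rwa [sdiff_singleton_eq_erase]) (by linarith)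
  have hsplit := sum_sdiff (f := w) hBA
  exact .cons hBA hB (.one (by linarith))

theorem PriceRobust.canSplit_of_pairs (hc : PriceRobust (∑ j ∈ ·, w j) (2 * h) (n + 1) A)
    (hw : ∀ j ∈ A, 0 ≤ w j) {x : ι} (hx : x ∈ A) (hmax : ∀ j ∈ A, w j ≤ w x) (hxh : w x < h)
    {P : Finset ι} (hP : P ⊆ A.erase x) (hcard : #P = 2 * n) (hPw : ∀ j ∈ P, h / 2 ≤ w j) :
    CanSplit (∑ j ∈ ·, w j) h (n + 2) A := by
  have hx0 := hw x hx
  obtain ⟨hPA, hxP⟩ := subset_erase.1 hP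
  have hPc : #P + 2 ≤ 2 * ((n : ℝ) + 1) := by
    rw [hcard]
    push_cast
    linarith
  obtain ⟨y, hy0, hy, hrest⟩ :=
    hc.exists_forall_le_add_le_sum_sdiff hw hx hmax (by linarith) hP hPc
  rw [add_comm n 2]
  exact .of_pairs hPA hcard hPw
    (canSplit_two_of_add_le_sum (mem_sdiff.2 ⟨hx, hxP⟩) hx0 (by linarith) hy hrest)

theorem PriceRobust.canSplit_of_forall_lt (hc : PriceRobust (∑ j ∈ ·, w j) (2 * h) (n + 1) A)
    (hA : A.Nonempty) (hw : ∀ j ∈ A, 0 ≤ w j) (hwh : ∀ j ∈ A, w j < h) :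
    CanSplit (∑ j ∈ ·, w j) h (n + 2) A := by
  obtain ⟨x, hx, hmax⟩ := exists_max_image A w hA
  set C := {j ∈ A | h / 2 < w j}
  rcases le_or_gt (2 * n) #(C.erase x) with hC | hC
  · obtain ⟨P, hPC, hPcard⟩ := exists_subset_card_eq hC
    exact hc.canSplit_of_pairs hw hx hmax (hwh x hx)
      (hPC.trans (erase_subset_erase x (filter_subset _ A))) hPcard
      fun j hj => (mem_filter.1 (mem_of_mem_erase (hPC hj))).2.le
  · have hCcard : #C - 1 ≤ #(C.erase x) := pred_card_le_card_erase
    exact canSplit_of_two_mul_le_sum ((hw x hx).trans (hwh x hx).le) (fun j hj => (hwh j hj).le)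
      (by lia) (by lia) (hc.mul_le_sum hw (by positivity))

theorem PriceRobust.canSplit (hc : PriceRobust (∑ j ∈ ·, w j) (2 * h) n A)
    (hw : ∀ j ∈ A, 0 ≤ w j) : CanSplit (∑ j ∈ ·, w j) h (n + 1) A := by
  rcases le_or_gt h 0 with hh | hh
  · exact .of_le_empty (hh.trans (sum_nonneg hw)) (by simpa using hh) n
  induction n generalizing A with
  | zero =>
    obtain ⟨S, hS, -, hSv⟩ := hc 0 (by simp) (by simp)
    have hSA := sum_le_sum_of_subset_of_nonneg hS fun j hj _ => hw j hj
    exact .one (by linarith)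
  | succ n ih =>
    push_cast at hc
    by_cases hlarge : ∃ x ∈ A, h ≤ w x
    · obtain ⟨x, hx, hxh⟩ := hlarge
      exact .cons (singleton_subset_iff.2 hx) (by simpa using hxh)
        (ih (hc.sdiff_singleton hx) fun j hj => hw j (sdiff_subset hj))
    · push Not at hlarge
      have hA : A.Nonempty := by
        have hsum : 2 * h * (n + 1) ≤ ∑ j ∈ A, w j := hc.mul_le_sum hw (by positivity)
        have hpos : 0 < 2 * h * (n + 1) := by positivity
        exact nonempty_of_sum_ne_zero (hpos.trans_le hsum).ne'
      exact hc.canSplit_of_forall_lt hA hw hlarge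

theorem canSplit_half_aps {b : ℝ} (hb : 0 < b) (hw : ∀ j ∈ A, 0 ≤ w j) :
    CanSplit (∑ j ∈ ·, w j) (1 / 2 * APS b (∑ j ∈ ·, w j) A) ⌈1 / b⌉₊ A := by
  obtain ⟨n, hn⟩ : ∃ n, ⌈1 / b⌉₊ = n + 1 :=
    Nat.exists_eq_add_one.2 (Nat.ceil_pos.2 (one_div_pos.2 hb))
  have hnb : n * b < 1 := (lt_div_iff₀ hb).1 (Nat.lt_ceil.1 (by lia))
  rw [hn]
  have hrobust := priceRobust_aps (M := A) (v := (∑ j ∈ ·, w j)) sum_empty hb.le hnb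
  exact PriceRobust.canSplit (by convert hrobust using 1; ring) hw

end Splitting

/-- For additive valuations: proportional share ≥ AnyPrice share ≥ pessimistic share
≥ half the AnyPrice share. -/
theorem shares_comparison_chain {ι : Type*} [DecidableEq ι] (M : Finset ι)
    (w : ι → ℝ) (hw : ∀ j ∈ M, 0 ≤ w j)
    (b : ℝ) (hb0 : 0 < b) (hb1 : b ≤ 1) :
    APS b (fun S => ∑ j ∈ S, w j) M ≤ b * ∑ j ∈ M, w j ∧
    Pessimistic b (fun S => ∑ j ∈ S, w j) M ≤ APS b (fun S => ∑ j ∈ S, w j) M ∧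
    (1 / 2) * APS b (fun S => ∑ j ∈ S, w j) M
      ≤ Pessimistic b (fun S => ∑ j ∈ S, w j) M := by
  have hd : 0 < ⌈1 / b⌉₊ := Nat.ceil_pos.2 (one_div_pos.2 hb0)
  have hdb : 1 / (⌈1 / b⌉₊ : ℝ) ≤ b := (one_div_le hb0 (mod_cast hd)).1 (Nat.le_ceil _)
  exact ⟨aps_le_mul_sum hb0.le hw, pessimistic_le_aps sum_empty hb0.le hb1,
    (canSplit_half_aps hb0 hw).le_pessimistic sum_empty hb1 hd hdb⟩
end
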